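/- Let 1 ≤ q < p ≤ ∞ and define r by 1/q = 1/p + 1/r, and suppose 1 ≤ r < 2. Then there is a constant c_r (depending only on r) such that for every bounded linear operator T : X → Y between real Banach spaces whose rank is at most n one has π_{p,q}(T) ≤ c_r · π_{p,q}^n(T). -/

import Mathlib

open scoped ENNReal NNReal BigOperators

noncomputable section

/-- The `ℓ_p`-sum `(∑ i, f i ^ p) ^ (1/p)` of a finite family in `ℝ≥0∞`,
with the usual sup-modification for `p = ∞`. -/
def eSum (p : ℝ≥0∞) {ι : Type*} [Fintype ι] (f : ι → ℝ≥0∞) : ℝ≥0∞ :=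
  if p = ∞ then ⨆ i, f i else (∑ i, f i ^ p.toReal) ^ (1 / p.toReal)

/-- The weak `ℓ_q`-norm of a finite family of vectors:
`sup { (∑ k |⟨x_k, x*⟩|^q)^(1/q) : x* in the unit ball of the dual }`. -/
def weakLq (q : ℝ≥0∞) {X : Type*} [NormedAddCommGroup X] [NormedSpace ℝ X]
    {n : ℕ} (x : Fin n → X) : ℝ≥0∞ :=
  ⨆ f : {f : X →L[ℝ] ℝ // ‖f‖ ≤ 1}, eSum q fun k => ENNReal.ofReal |f.1 (x k)|

/-- The `(p,q)`-summing norm of `T` with respect to `n` vectors. -/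
def piN (p q : ℝ≥0∞) {X Y : Type*} [NormedAddCommGroup X] [NormedSpace ℝ X]
    [NormedAddCommGroup Y] [NormedSpace ℝ Y] (n : ℕ) (T : X →L[ℝ] Y) : ℝ≥0∞ :=
  ⨆ x : {x : Fin n → X // weakLq q x ≤ 1}, eSum p fun k => ENNReal.ofReal ‖T (x.1 k)‖

/-- The `(p,q)`-summing norm of `T`. -/
def piPQ (p q : ℝ≥0∞) {X Y : Type*} [NormedAddCommGroup X] [NormedSpace ℝ X]
    [NormedAddCommGroup Y] [NormedSpace ℝ Y] (T : X →L[ℝ] Y) : ℝ≥0∞ :=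
  ⨆ n : ℕ, piN p q n T

/-- `T` has rank at most `n`: its range is a finite-dimensional subspace of
dimension at most `n`. -/
def RankLE {X Y : Type*} [NormedAddCommGroup X] [NormedSpace ℝ X]
    [NormedAddCommGroup Y] [NormedSpace ℝ Y] (T : X →L[ℝ] Y) (n : ℕ) : Prop :=
  FiniteDimensional ℝ (LinearMap.range (T : X →ₗ[ℝ] Y)) ∧
    Module.finrank ℝ (LinearMap.range (T : X →ₗ[ℝ] Y)) ≤ n

/-- The average of `‖∑ k, ε k • x k‖²` over all `2^n` sign choices `ε ∈ {-1,1}^n`. -/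
def radAvg {X : Type*} [NormedAddCommGroup X] [NormedSpace ℝ X] {n : ℕ}
    (x : Fin n → X) : ℝ :=
  (∑ ε : Fin n → Bool, ‖∑ k, (if ε k then (1 : ℝ) else -1) • x k‖ ^ 2) / 2 ^ n

/-- The Rademacher cotype `q` constant of `T` with respect to `n` vectors. -/
def cotypeN (q : ℝ) {X Y : Type*} [NormedAddCommGroup X] [NormedSpace ℝ X]
    [NormedAddCommGroup Y] [NormedSpace ℝ Y] (n : ℕ) (T : X →L[ℝ] Y) : ℝ≥0∞ :=
  ⨆ x : {x : Fin n → X // Real.sqrt (radAvg x) ≤ 1},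
    (∑ k, ENNReal.ofReal ‖T (x.1 k)‖ ^ q) ^ (1 / q)

/-- The Rademacher cotype `q` constant of `T`. -/
def cotype (q : ℝ) {X Y : Type*} [NormedAddCommGroup X] [NormedSpace ℝ X]
    [NormedAddCommGroup Y] [NormedSpace ℝ Y] (T : X →L[ℝ] Y) : ℝ≥0∞ :=
  ⨆ n : ℕ, cotypeN q n T

/-!
Let `y_1, …, y_m` be unit vectors in a space of dimension `n`, with norming functionals `φ_k`. The
matrix `(φ_k(y_l))` has trace `m` and rank at most `n`, so its squared Hilbert–Schmidt norm is at
least `m² / n`, and some `φ = φ_k` satisfies `∑_l φ(y_l)² ≥ m / n`. Since `r < 2`, this forces a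
level `t` with `#{l : |φ(y_l)| ≥ t} · t^r ≥ c m / n`.

For `y_l = T x_l`, the signed sum of the `x_l` over this level set `A`, multiplied by
`#A^(1/q - 1)`, is a single vector `z` that is weakly dominated by `(x_l)_{l ∈ A}`, while
`‖T z‖^p ≥ #A · (c m / n)^(p/r)`. Extracting `n` disjoint sets greedily compresses any `m ≥ n`
vectors to `n` vectors with no larger weak `ℓ_q`-norm. By homogeneity, a family of `m ≥ n` vectors
of weak `ℓ_q`-norm at most `1` therefore satisfies
`min_l ‖T x_l‖^p ≤ (C π_{p,q}^n(T))^p · n / m²`.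
Removing minimal vectors one at a time until `n` are left, the discarded terms are summed by
`∑_{m > n} n / m² ≤ 1`.
-/

section FiniteSums

open Finset

lemma sq_norm_trace_le_rank_mul_sum_sq_norm {𝕜 ι : Type*} [RCLike 𝕜] [Fintype ι]
    (A : Matrix ι ι 𝕜) : ‖A.trace‖ ^ 2 ≤ A.rank * ∑ l, ∑ k, ‖A k l‖ ^ 2 := by
  let W := (Submodule.span 𝕜 (Set.range A.col)).map
    (WithLp.linearEquiv 2 𝕜 (ι → 𝕜)).symm.toLinearMap
  have hW : Module.finrank 𝕜 W = A.rank := by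
    rw [A.rank_eq_finrank_span_cols, LinearEquiv.finrank_map_eq]
  let w (l : ι) : W := ⟨WithLp.toLp 2 (A.col l),
    Submodule.mem_map_of_mem (Submodule.subset_span (Set.mem_range_self l))⟩
  let u := stdOrthonormalBasis 𝕜 W
  have sum_sq_coeff (l : ι) : ∑ i, ‖inner 𝕜 (u i) (w l)‖ ^ 2 = ∑ k, ‖A k l‖ ^ 2 := by
    rw [u.sum_sq_norm_inner_right, Submodule.coe_norm, EuclideanSpace.norm_sq_eq]
    rfl
  have sum_sq_basis (i) : ∑ l, ‖(u i : EuclideanSpace 𝕜 ι) l‖ ^ 2 = 1 := by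
    rw [← EuclideanSpace.norm_sq_eq, ← Submodule.coe_norm, u.orthonormal.1 i, one_pow]
  have trace_eq : A.trace = ∑ x : ι × Fin (Module.finrank 𝕜 W),
      inner 𝕜 (u x.2) (w x.1) * (u x.2 : EuclideanSpace 𝕜 ι) x.1 := by
    rw [Fintype.sum_prod_type]
    refine Finset.sum_congr rfl fun l _ => ?_
    have expansion := congrArg (fun v : W => (v : EuclideanSpace 𝕜 ι) l) (u.sum_repr' (w l))
    simp only [Submodule.coe_sum, Submodule.coe_smul, WithLp.ofLp_sum, Finset.sum_apply,
      PiLp.smul_apply, smul_eq_mul] at expansion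
    exact expansion.symm
  calc ‖A.trace‖ ^ 2
      ≤ (∑ x : ι × Fin (Module.finrank 𝕜 W),
          ‖inner 𝕜 (u x.2) (w x.1)‖ * ‖(u x.2 : EuclideanSpace 𝕜 ι) x.1‖) ^ 2 := by
        rw [trace_eq]
        gcongr
        exact norm_sum_le_of_le _ fun x _ => norm_mul_le _ _
    _ ≤ (∑ x : ι × Fin (Module.finrank 𝕜 W), ‖inner 𝕜 (u x.2) (w x.1)‖ ^ 2) *
          ∑ x : ι × Fin (Module.finrank 𝕜 W), ‖(u x.2 : EuclideanSpace 𝕜 ι) x.1‖ ^ 2 :=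
        Finset.sum_mul_sq_le_sq_mul_sq _ _ _
    _ = A.rank * ∑ l, ∑ k, ‖A k l‖ ^ 2 := by
        rw [Fintype.sum_prod_type, Fintype.sum_prod_type_right, mul_comm, ← hW]
        simp only [sum_sq_coeff, sum_sq_basis, sum_const, card_univ, Fintype.card_fin,
          nsmul_eq_mul, mul_one]

lemma exists_dual_card_le_finrank_mul_sum_sq_norm {𝕜 E ι : Type*} [RCLike 𝕜]
    [NormedAddCommGroup E] [NormedSpace 𝕜 E] (V : Submodule 𝕜 E) [FiniteDimensional 𝕜 V]
    {J : Finset ι} {y : ι → E} (hyV : ∀ l ∈ J, y l ∈ V) (hy : ∀ l ∈ J, ‖y l‖ = 1) :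
    ∃ φ : StrongDual 𝕜 E, ‖φ‖ ≤ 1 ∧
      (#J : ℝ) ≤ Module.finrank 𝕜 V * ∑ l ∈ J, ‖φ (y l)‖ ^ 2 := by
  obtain rfl | hJ := J.eq_empty_or_nonempty
  · exact ⟨0, by simp⟩
  choose φ norm_φ φ_self using fun k : J => exists_dual_vector'' 𝕜 (y k)
  let A : Matrix J J 𝕜 := Matrix.of fun k l => φ k (y l)
  have rank_le : A.rank ≤ Module.finrank 𝕜 V := by
    rw [A.rank_eq_finrank_span_cols]
    refine (Submodule.finrank_mono (Submodule.span_le.2 ?_)).trans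
      (Submodule.finrank_map_le (LinearMap.pi fun k => (φ k : E →ₗ[𝕜] 𝕜)) V)
    rintro _ ⟨l, rfl⟩
    exact Submodule.mem_map_of_mem (hyV l l.2)
  have trace_eq : A.trace = #J := by
    simp [A, Matrix.trace, φ_self, hy]
  have card_sq_le : (#J : ℝ) ^ 2 ≤ ∑ k : J, Module.finrank 𝕜 V * ∑ l : J, ‖A k l‖ ^ 2 := by
    rw [← mul_sum, sum_comm]
    calc (#J : ℝ) ^ 2 = ‖A.trace‖ ^ 2 := by rw [trace_eq, RCLike.norm_natCast]
      _ ≤ A.rank * ∑ l, ∑ k, ‖A k l‖ ^ 2 := sq_norm_trace_le_rank_mul_sum_sq_norm A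
      _ ≤ Module.finrank 𝕜 V * ∑ l, ∑ k, ‖A k l‖ ^ 2 := by gcongr
  obtain ⟨k, -, hk⟩ : ∃ k ∈ (univ : Finset J),
      (#J : ℝ) ≤ Module.finrank 𝕜 V * ∑ l : J, ‖A k l‖ ^ 2 := by
    refine exists_le_of_sum_le (univ_nonempty_iff.2 hJ.to_subtype) ?_
    simpa [sq] using card_sq_le
  exact ⟨φ k, norm_φ k, hk.trans_eq (congrArg _ (sum_coe_sort J fun l => ‖φ k (y l)‖ ^ 2))⟩

lemma sum_rpow_le_of_card_mul_rpow_le {ι : Type*} {I : Finset ι} {g : ι → ℝ} {r s K : ℝ}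
    (hs : 0 < s) (hrs : r < s) (hg : ∀ l ∈ I, g l ∈ Set.Icc (0 : ℝ) 1)
    (hK : ∀ t ∈ Set.Ioc (0 : ℝ) 1, #{l ∈ I | t ≤ g l} * t ^ r ≤ K) :
    ∑ l ∈ I, g l ^ s ≤ s / (s - r) * K := by
  have integrable_layer (l : ι) : IntervalIntegrable
      ({t | t ≤ g l}.indicator fun t : ℝ => s * t ^ (s - 1)) MeasureTheory.volume 0 1 := by
    have h := (intervalIntegral.intervalIntegrable_rpow' (a := 0) (b := 1)
      (r := s - 1) (by linarith)).const_mul s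
    exact ⟨h.1.indicator measurableSet_Iic, h.2.indicator measurableSet_Iic⟩
  have layer_cake : ∀ l ∈ I,
      g l ^ s = ∫ t in (0 : ℝ)..1, {t | t ≤ g l}.indicator (fun t => s * t ^ (s - 1)) t := by
    intro l hl
    rw [intervalIntegral.integral_indicator (hg l hl), intervalIntegral.integral_const_mul,
      integral_rpow (Or.inl (by linarith)), sub_add_cancel, Real.zero_rpow hs.ne', sub_zero]
    field_simp
  rw [sum_congr rfl layer_cake, ← intervalIntegral.integral_finsetSum fun l _ => integrable_layer l]
  have layer_sum_le : ∀ t ∈ Set.Ioo (0 : ℝ) 1,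
      ∑ l ∈ I, {t | t ≤ g l}.indicator (fun t => s * t ^ (s - 1)) t ≤ s * K * t ^ (s - r - 1) := by
    intro t ht
    have rpow_split : t ^ (s - 1) = t ^ r * t ^ (s - r - 1) := by
      rw [← Real.rpow_add ht.1]
      ring_nf
    calc ∑ l ∈ I, {t | t ≤ g l}.indicator (fun t => s * t ^ (s - 1)) t
        = #{l ∈ I | t ≤ g l} * t ^ r * (s * t ^ (s - r - 1)) := by
          simp only [Set.indicator_apply, Set.mem_ofPred_eq]
          rw [← sum_filter, sum_const, nsmul_eq_mul, rpow_split]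
          ring
      _ ≤ K * (s * t ^ (s - r - 1)) := by
          have := ht.1
          gcongr
          exact hK t (Set.Ioo_subset_Ioc_self ht)
      _ = s * K * t ^ (s - r - 1) := by ring
  calc ∫ t in (0 : ℝ)..1, ∑ l ∈ I, {t | t ≤ g l}.indicator (fun t => s * t ^ (s - 1)) t
      ≤ ∫ t in (0 : ℝ)..1, s * K * t ^ (s - r - 1) := by
        refine intervalIntegral.integral_mono_on_of_le_Ioo zero_le_one ?_ ?_ layer_sum_le
        · simpa only [sum_fn] using IntervalIntegrable.sum I fun l _ => integrable_layer l
        · exact (intervalIntegral.intervalIntegrable_rpow' (by linarith)).const_mul _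
    _ = s / (s - r) * K := by
        rw [intervalIntegral.integral_const_mul, integral_rpow (Or.inl (by linarith)),
          sub_add_cancel, Real.zero_rpow (by linarith), Real.one_rpow]
        ring

lemma exists_sum_rpow_le_card_mul_rpow {ι : Type*} {I : Finset ι} {g : ι → ℝ} {r s : ℝ}
    (hs : 0 < s) (hrs : r < s) (hg : ∀ l ∈ I, g l ∈ Set.Icc (0 : ℝ) 1) :
    ∃ t ∈ Set.Ioc (0 : ℝ) 1,
      (s - r) / (2 * s) * ∑ l ∈ I, g l ^ s ≤ #{l ∈ I | t ≤ g l} * t ^ r := by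
  by_contra! hlt
  set S := ∑ l ∈ I, g l ^ s
  have pos : 0 < (s - r) / (2 * s) * S :=
    lt_of_le_of_lt (by positivity) (hlt 1 (Set.right_mem_Ioc.2 one_pos))
  have half : S ≤ s / (s - r) * ((s - r) / (2 * s) * S) :=
    sum_rpow_le_of_card_mul_rpow_le hs hrs hg fun t ht => (hlt t ht).le
  have : s / (s - r) * ((s - r) / (2 * s) * S) = S / 2 := by
    have := (sub_pos.2 hrs).ne'
    field_simp
  have : 0 < S := pos_of_mul_pos_right pos (by have := sub_pos.2 hrs; positivity)
  linarith

lemma norm_card_rpow_smul_sum_rpow_le {E ι : Type*} [SeminormedAddCommGroup E] [NormedSpace ℝ E]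
    {q : ℝ} (hq : 1 ≤ q) (A : Finset ι) (v : ι → E) :
    ‖(#A : ℝ) ^ (q⁻¹ - 1) • ∑ l ∈ A, v l‖ ^ q ≤ ∑ l ∈ A, ‖v l‖ ^ q := by
  have hq0 : 0 < q := one_pos.trans_le hq
  obtain rfl | hA := A.eq_empty_or_nonempty
  · simp [Real.zero_rpow hq0.ne']
  have card_pos : (0 : ℝ) < #A := mod_cast hA.card_pos
  have exponents : (q⁻¹ - 1) * q + (q - 1) = 0 := by field_simp; ring
  calc ‖(#A : ℝ) ^ (q⁻¹ - 1) • ∑ l ∈ A, v l‖ ^ q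
      ≤ ((#A : ℝ) ^ (q⁻¹ - 1) * ∑ l ∈ A, ‖v l‖) ^ q := by
        rw [norm_smul, Real.norm_of_nonneg (by positivity)]
        gcongr
        exact norm_sum_le _ _
    _ = (#A : ℝ) ^ ((q⁻¹ - 1) * q) * (∑ l ∈ A, ‖v l‖) ^ q := by
        rw [Real.mul_rpow (by positivity) (by positivity), ← Real.rpow_mul card_pos.le]
    _ ≤ (#A : ℝ) ^ ((q⁻¹ - 1) * q) * ((#A : ℝ) ^ (q - 1) * ∑ l ∈ A, ‖v l‖ ^ q) := by
        gcongr
        exact Real.rpow_sum_le_const_mul_sum_rpow_of_nonneg A hq fun _ _ => norm_nonneg _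
    _ = ∑ l ∈ A, ‖v l‖ ^ q := by
        rw [← mul_assoc, ← Real.rpow_add card_pos, exponents, Real.rpow_zero, one_mul]

lemma exists_pairwise_disjoint_subsets {ι : Type*} {I : Finset ι} {Q : Finset ι → Prop}
    {b κ : ℝ} (hQ : Q ∅) (hI : ∀ J ⊆ I, b < #J → ∃ A ⊆ J, κ ≤ #A ∧ Q A) (j : ℕ) :
    ∃ A : Fin j → Finset ι, (∀ i, A i ⊆ I ∧ Q (A i)) ∧ Pairwise (Function.onFun Disjoint A) ∧
      min (#I - b) (j * κ) ≤ ∑ i, (#(A i) : ℝ) := by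
  classical
  induction j generalizing I with
  | zero => exact ⟨Fin.elim0, fun i => i.elim0, fun i => i.elim0, by simp⟩
  | succ j ih =>
    obtain hb | hb := le_or_gt (#I : ℝ) b
    · exact ⟨fun _ => ∅, fun _ => ⟨empty_subset I, hQ⟩, fun _ _ _ => disjoint_empty_left _, by
        simp [hb]⟩
    obtain ⟨B, hBI, hκB, hQB⟩ := hI I Subset.rfl hb
    obtain ⟨A, hA, hdisj, hmin⟩ := ih fun J hJ => hI J (hJ.trans sdiff_subset)
    have disjoint_B (i) : Disjoint B (A i) := disjoint_sdiff.mono_right (hA i).1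
    refine ⟨Fin.cons B A, Fin.cases ⟨hBI, hQB⟩ fun i => ⟨(hA i).1.trans sdiff_subset, (hA i).2⟩,
      Fin.cases (Fin.cases (absurd rfl) fun i _ => disjoint_B i) fun i =>
        Fin.cases (fun _ => (disjoint_B i).symm) fun k hik => hdisj (by simpa using hik), ?_⟩
    rw [cast_card_sdiff hBI] at hmin
    calc min (#I - b) ((j + 1 : ℕ) * κ)
        ≤ #B + min (#I - #B - b) (j * κ) := by
          rw [← min_add_add_left]
          refine min_le_min (by linarith) ?_
          push_cast
          linarith
      _ ≤ #B + ∑ i, (#(A i) : ℝ) := by gcongr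
      _ = ∑ i, (#((Fin.cons B A : Fin (j + 1) → Finset ι) i) : ℝ) := by
          simp [Fin.sum_univ_succ]

lemma sum_le_add_div_of_exists_mul_sq_card_le {ι : Type*} {I : Finset ι} {a : ι → ℝ} {n : ℕ}
    {P C : ℝ} (hn : 0 < n) (hC : 0 ≤ C) (hP : ∀ J ⊆ I, #J ≤ n → ∑ l ∈ J, a l ≤ P)
    (hJC : ∀ J ⊆ I, n < #J → ∃ l ∈ J, a l * #J ^ 2 ≤ C) :
    ∑ l ∈ I, a l ≤ P + C / n := by
  classical
  have hn' : (0 : ℝ) < n := mod_cast hn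
  obtain hI | hI := le_or_gt #I n
  · exact (hP I Subset.rfl hI).trans (le_add_of_nonneg_right (by positivity))
  have sum_le (m : ℕ) (hm : n ≤ m) :
      ∀ J ⊆ I, #J = m → ∑ l ∈ J, a l ≤ P + C * (1 / n - 1 / m) := by
    induction m, hm using Nat.le_induction with
    | base => intro J hJI hJ; simpa using hP J hJI hJ.le
    | succ m hm ih =>
      intro J hJI hJ
      obtain ⟨k, hk, hkC⟩ := hJC J hJI (by omega)
      have hm' : (0 : ℝ) < m := hn'.trans_le (mod_cast hm)
      have erase_le := ih (J.erase k) ((erase_subset k J).trans hJI) (by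
        rw [card_erase_of_mem hk, hJ, Nat.add_sub_cancel])
      have telescope : 1 / ((m : ℝ) + 1) ^ 2 ≤ 1 / m - 1 / (m + 1) := by
        rw [div_sub_div _ _ hm'.ne' (by positivity),
          div_le_div_iff₀ (by positivity) (by positivity)]
        nlinarith
      have term_le : a k ≤ C * (1 / m - 1 / (m + 1)) := by
        rw [hJ, ← le_div_iff₀ (by positivity), div_eq_mul_one_div] at hkC
        push_cast at hkC
        exact hkC.trans (by gcongr)
      rw [← sum_erase_add J a hk]
      push_cast
      linarith
  refine (sum_le #I hI.le I Subset.rfl rfl).trans ?_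
  rw [mul_sub, mul_one_div]
  have : 0 ≤ C * (1 / #I) := by positivity
  linarith

lemma exists_fin_padding {ι E : Type*} [Zero E] {I : Finset ι} {n : ℕ} (hI : #I ≤ n) (x : ι → E) :
    ∃ z : Fin n → E, ∀ F : E → ℝ, F 0 = 0 →
      ∑ i, F (z i) = ∑ l ∈ I, F (x l) := by
  let e : I → Fin n := Fin.castLE hI ∘ I.equivFin
  have he : Function.Injective e := (Fin.castLE_injective hI).comp I.equivFin.injective
  refine ⟨Function.extend e (fun l => x l) 0, fun F hF => ?_⟩
  rw [← sum_coe_sort I]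
  symm
  refine Fintype.sum_of_injective e he _ _ (fun i hi => ?_) fun l => ?_
  · rw [Function.extend_apply' _ _ _ hi, Pi.zero_apply, hF]
  · rw [he.extend_apply]

end FiniteSums

lemma two_le_of_holderTriple {p q r : ℝ} (h : p.HolderTriple r q) (hq : 1 ≤ q) (hr : r ≤ 2) :
    2 ≤ p := by
  have inv_q_le : q⁻¹ ≤ 1 := inv_le_one_of_one_le₀ hq
  have inv_two_le : (2 : ℝ)⁻¹ ≤ r⁻¹ := inv_anti₀ h.right_pos hr
  refine (inv_le_inv₀ h.left_pos two_pos).1 ?_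
  linarith [h.inv_add_inv_eq_inv]

lemma rpow_mul_sq_div_le_mul_rpow {p q r d m n : ℝ} (h : p.HolderTriple r q) (hq : 1 ≤ q)
    (hrp : r ≤ p) (hd0 : 0 < d) (hd1 : d ≤ 1) (hn : 0 < n) (hnm : n ≤ m) :
    d ^ p * (m ^ 2 / n) ≤ d * m * (d * (m / n)) ^ (p / r) := by
  have hp : 0 < p := h.left_pos
  have hr : 0 < r := h.right_pos
  have exponents : 1 + p / r ≤ p := by
    have : 1 + p / r = p * q⁻¹ := by rw [← h.inv_add_inv_eq_inv]; field_simp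
    rw [this]
    exact mul_le_of_le_one_right hp.le (inv_le_one_of_one_le₀ hq)
  have hm : 0 < m := hn.trans_le hnm
  calc d ^ p * (m ^ 2 / n) ≤ d ^ (1 + p / r) * (m ^ 2 / n) := by
        gcongr ?_ * _
        exact Real.rpow_le_rpow_of_exponent_ge hd0 hd1 exponents
    _ = d * m * (d ^ (p / r) * (m / n)) := by
        rw [Real.rpow_add hd0, Real.rpow_one]
        ring
    _ ≤ d * m * (d ^ (p / r) * (m / n) ^ (p / r)) := by
        gcongr
        exact Real.self_le_rpow_of_one_le ((one_le_div hn).2 hnm) ((one_le_div hr).2 hrp)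
    _ = d * m * (d * (m / n)) ^ (p / r) := by
        rw [Real.mul_rpow hd0.le (by positivity)]

lemma mul_mul_rpow_rpow_div_eq {p q r c t : ℝ} (h : p.HolderTriple r q) (hc : 0 ≤ c) (ht : 0 ≤ t) :
    c * (c * t ^ r) ^ (p / r) = (c ^ (q⁻¹ - 1) * (c * t)) ^ p := by
  have hp : 0 < p := h.left_pos
  have hr : 0 < r := h.right_pos
  obtain rfl | hc := hc.eq_or_lt
  · simp [hp.ne']
  have exponents : 1 + p / r = q⁻¹ * p := by rw [← h.inv_add_inv_eq_inv]; field_simp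
  calc c * (c * t ^ r) ^ (p / r) = c ^ (1 + p / r) * t ^ p := by
        rw [Real.mul_rpow hc.le (by positivity), ← Real.rpow_mul ht, mul_div_cancel₀ _ hr.ne',
          Real.rpow_add hc, Real.rpow_one, mul_assoc]
    _ = (c ^ q⁻¹ * t) ^ p := by
        rw [exponents, Real.mul_rpow (by positivity) ht, ← Real.rpow_mul hc.le]
    _ = (c ^ (q⁻¹ - 1) * (c * t)) ^ p := by
        rw [← mul_assoc, ← Real.rpow_add_one hc.ne', sub_add_cancel]

lemma holderTriple_toReal {p q r : ℝ≥0∞} (hp0 : p ≠ 0) (hp : p ≠ ∞) (hr0 : r ≠ 0) (hr : r ≠ ∞)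
    (hpqr : 1 / q = 1 / p + 1 / r) : p.toReal.HolderTriple r.toReal q.toReal := by
  refine ⟨?_, ENNReal.toReal_pos hp0 hp, ENNReal.toReal_pos hr0 hr⟩
  simp only [one_div] at hpqr
  rw [← ENNReal.toReal_inv, ← ENNReal.toReal_inv, ← ENNReal.toReal_inv, hpqr,
    ENNReal.toReal_add (ENNReal.inv_ne_top.2 hp0) (ENNReal.inv_ne_top.2 hr0)]

section Operators

open Finset

variable {X Y ι : Type*} [NormedAddCommGroup X] [NormedSpace ℝ X] [NormedAddCommGroup Y]
  [NormedSpace ℝ Y] {T : X →L[ℝ] Y} {n : ℕ} {p q r : ℝ}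

lemma exists_dual_card_le_finrank_mul_card_level (hr : r < 2) (V : Submodule ℝ Y)
    [FiniteDimensional ℝ V] {J : Finset ι} {y : ι → Y} (hyV : ∀ l ∈ J, y l ∈ V)
    (hy : ∀ l ∈ J, ‖y l‖ = 1) :
    ∃ φ : StrongDual ℝ Y, ‖φ‖ ≤ 1 ∧ ∃ t ∈ Set.Ioc (0 : ℝ) 1,
      (2 - r) / 4 * #J ≤ Module.finrank ℝ V * (#{l ∈ J | t ≤ |φ (y l)|} * t ^ r) := by
  obtain ⟨φ, hφ, hsum⟩ := exists_dual_card_le_finrank_mul_sum_sq_norm V hyV hy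
  obtain ⟨t, ht, hlevel⟩ := exists_sum_rpow_le_card_mul_rpow (I := J) (g := fun l => |φ (y l)|)
    two_pos hr fun l hl => ⟨abs_nonneg _, (φ.le_opNorm (y l)).trans (by rwa [hy l hl, mul_one])⟩
  refine ⟨φ, hφ, t, ht, ?_⟩
  simp only [Real.rpow_two, Real.norm_eq_abs] at hlevel hsum
  have : 0 ≤ (2 - r) / 4 := by linarith
  calc (2 - r) / 4 * #J
      ≤ (2 - r) / 4 * (Module.finrank ℝ V * ∑ l ∈ J, |φ (y l)| ^ 2) := by gcongr
    _ = Module.finrank ℝ V * ((2 - r) / (2 * 2) * ∑ l ∈ J, |φ (y l)| ^ 2) := by ring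
    _ ≤ Module.finrank ℝ V * (#{l ∈ J | t ≤ |φ (y l)|} * t ^ r) := by gcongr

lemma exists_signed_sum_dominated (hq : 1 ≤ q) {φ : StrongDual ℝ Y} (hφ : ‖φ‖ ≤ 1)
    {A : Finset ι} {x : ι → X} {t : ℝ} (hx : ∀ l ∈ A, t ≤ |φ (T (x l))|) :
    ∃ z : X, (∀ f : StrongDual ℝ X, |f z| ^ q ≤ ∑ l ∈ A, |f (x l)| ^ q) ∧
      (#A : ℝ) ^ (q⁻¹ - 1) * (#A * t) ≤ ‖T z‖ := by
  let τ (l : ι) : ℝ := SignType.sign (φ (T (x l)))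
  have abs_τ_le (l : ι) : |τ l| ≤ 1 := by
    obtain h | h | h := lt_trichotomy (φ (T (x l))) 0 <;> simp [τ, h]
  refine ⟨(#A : ℝ) ^ (q⁻¹ - 1) • ∑ l ∈ A, τ l • x l, fun f => ?_, ?_⟩
  · calc |f ((#A : ℝ) ^ (q⁻¹ - 1) • ∑ l ∈ A, τ l • x l)| ^ q
        = ‖(#A : ℝ) ^ (q⁻¹ - 1) • ∑ l ∈ A, f (τ l • x l)‖ ^ q := by
          rw [map_smul, map_sum, Real.norm_eq_abs]
      _ ≤ ∑ l ∈ A, ‖f (τ l • x l)‖ ^ q := norm_card_rpow_smul_sum_rpow_le hq A _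
      _ ≤ ∑ l ∈ A, |f (x l)| ^ q := by
          gcongr with l
          rw [map_smul, norm_smul, Real.norm_eq_abs, Real.norm_eq_abs]
          exact mul_le_of_le_one_left (abs_nonneg _) (abs_τ_le l)
  · calc (#A : ℝ) ^ (q⁻¹ - 1) * (#A * t)
        ≤ (#A : ℝ) ^ (q⁻¹ - 1) * ∑ l ∈ A, |φ (T (x l))| := by
          rw [← nsmul_eq_mul #A t]
          gcongr
          exact card_nsmul_le_sum A _ t hx
      _ = φ (T ((#A : ℝ) ^ (q⁻¹ - 1) • ∑ l ∈ A, τ l • x l)) := by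
          simp only [map_smul, map_sum, smul_eq_mul, τ, sign_mul_self]
      _ ≤ ‖T ((#A : ℝ) ^ (q⁻¹ - 1) • ∑ l ∈ A, τ l • x l)‖ :=
          (le_abs_self _).trans ((φ.le_of_opNorm_le hφ _).trans_eq (one_mul _))

lemma exists_subset_dominating (h : p.HolderTriple r q) (hq : 1 ≤ q) (hr : r < 2) (hn : 0 < n)
    (hT : RankLE T n) {J : Finset ι} {x : ι → X} (hx : ∀ l ∈ J, ‖T (x l)‖ = 1) {K : ℝ}
    (hK0 : 0 ≤ K) (hK : n * K ≤ (2 - r) / 4 * #J) :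
    ∃ A ⊆ J, K ≤ #A ∧ ∃ z : X,
      (∀ f : StrongDual ℝ X, |f z| ^ q ≤ ∑ l ∈ A, |f (x l)| ^ q) ∧
        #A * K ^ (p / r) ≤ ‖T z‖ ^ p := by
  have hp : 0 < p := h.left_pos
  have hr0 : 0 < r := h.right_pos
  have := hT.1
  obtain ⟨φ, hφ, t, ⟨ht0, ht1⟩, hlevel⟩ := exists_dual_card_le_finrank_mul_card_level hr
    (LinearMap.range (T : X →ₗ[ℝ] Y)) (y := fun l => T (x l)) (fun l _ => ⟨x l, rfl⟩) hx
  set A := {l ∈ J | t ≤ |φ (T (x l))|}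
  have hKA : K ≤ #A * t ^ r := by
    refine le_of_mul_le_mul_left (hK.trans (hlevel.trans ?_)) (Nat.cast_pos.2 hn)
    gcongr
    exact hT.2
  obtain ⟨z, hz, hTz⟩ := exists_signed_sum_dominated (T := T) hq hφ (A := A) (x := x) (t := t)
    fun l hl => (mem_filter.1 hl).2
  refine ⟨A, filter_subset _ _, hKA.trans (mul_le_of_le_one_right (by positivity)
    (Real.rpow_le_one ht0.le ht1 hr0.le)), z, hz, ?_⟩
  calc #A * K ^ (p / r) ≤ #A * (#A * t ^ r) ^ (p / r) := by gcongr
    _ = ((#A : ℝ) ^ (q⁻¹ - 1) * (#A * t)) ^ p := mul_mul_rpow_rpow_div_eq h (by positivity) ht0.le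
    _ ≤ ‖T z‖ ^ p := by gcongr

lemma exists_fin_dominated_of_norm_eq_one (h : p.HolderTriple r q) (hq : 1 ≤ q) (hr : r < 2)
    (hn : 0 < n) (hT : RankLE T n) {I : Finset ι} {x : ι → X} (hx : ∀ l ∈ I, ‖T (x l)‖ = 1) :
    ∃ z : Fin n → X,
      (∀ f : StrongDual ℝ X, ∑ i, |f (z i)| ^ q ≤ ∑ l ∈ I, |f (x l)| ^ q) ∧
        (2 - r) / 8 * #I * ((2 - r) / 8 * (#I / n)) ^ (p / r) ≤ ∑ i, ‖T (z i)‖ ^ p := by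
  classical
  have hr0 : 0 < r := h.right_pos
  have : (0 : ℝ) < n := mod_cast hn
  set K : ℝ := (2 - r) / 8 * (#I / n) with hKdef
  have hK0 : 0 ≤ K := mul_nonneg (by linarith) (by positivity)
  have mul_K : n * K = (2 - r) / 8 * #I := by rw [hKdef]; field_simp
  let Q (A : Finset ι) : Prop := ∃ z : X,
    (∀ f : StrongDual ℝ X, |f z| ^ q ≤ ∑ l ∈ A, |f (x l)| ^ q) ∧ #A * K ^ (p / r) ≤ ‖T z‖ ^ p
  have Q_empty : Q ∅ := ⟨0, fun f => by simp [Real.zero_rpow (one_pos.trans_le hq).ne'], by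
    simp [Real.zero_rpow h.left_pos.ne']⟩
  -- Extracting from `J` with `#J > #I / 2` turns the constant `(2 - r) / 4` into `(2 - r) / 8`.
  obtain ⟨A, hA, hdisj, hcard⟩ := exists_pairwise_disjoint_subsets (I := I) (b := #I / 2) (κ := K)
    Q_empty (fun J hJ hIJ => exists_subset_dominating h hq hr hn hT (fun l hl => hx l (hJ hl)) hK0
      (by rw [mul_K]; nlinarith)) n
  choose hAI z hz hTz using hA
  refine ⟨z, fun f => ?_, ?_⟩
  · calc ∑ i, |f (z i)| ^ q ≤ ∑ i, ∑ l ∈ A i, |f (x l)| ^ q := sum_le_sum fun i _ => hz i f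
      _ = ∑ l ∈ univ.biUnion A, |f (x l)| ^ q := (sum_biUnion (hdisj.set_pairwise _)).symm
      _ ≤ ∑ l ∈ I, |f (x l)| ^ q :=
        sum_le_sum_of_subset_of_nonneg (biUnion_subset.2 fun i _ => hAI i) fun l _ _ => by
          positivity
  · have card_le : (2 - r) / 8 * #I ≤ ∑ i, (#(A i) : ℝ) := by
      refine le_trans (le_min ?_ mul_K.ge) hcard
      nlinarith [Nat.cast_nonneg (α := ℝ) #I]
    calc (2 - r) / 8 * #I * K ^ (p / r) ≤ (∑ i, (#(A i) : ℝ)) * K ^ (p / r) := by gcongr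
      _ ≤ ∑ i, ‖T (z i)‖ ^ p := by
        rw [sum_mul]
        exact sum_le_sum fun i _ => hTz i

lemma exists_fin_dominated_of_le_norm (h : p.HolderTriple r q) (hq : 1 ≤ q) (hr : r < 2)
    (hn : 0 < n) (hT : RankLE T n) {I : Finset ι} (hI : n ≤ #I) {x : ι → X} {s : ℝ} (hs : 0 < s)
    (hx : ∀ l ∈ I, s ≤ ‖T (x l)‖) :
    ∃ z : Fin n → X,
      (∀ f : StrongDual ℝ X, ∑ i, |f (z i)| ^ q ≤ ∑ l ∈ I, |f (x l)| ^ q) ∧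
        s ^ p * (((2 - r) / 8) ^ p * (#I ^ 2 / n)) ≤ ∑ i, ‖T (z i)‖ ^ p := by
  have hr0 : 0 < r := h.right_pos
  have hrp : r ≤ p := hr.le.trans (two_le_of_holderTriple h hq hr.le)
  have norm_pos (l) (hl : l ∈ I) : 0 < ‖T (x l)‖ := hs.trans_le (hx l hl)
  obtain ⟨z, hz, hTz⟩ := exists_fin_dominated_of_norm_eq_one h hq hr hn hT (I := I)
    (x := fun l => ‖T (x l)‖⁻¹ • x l) fun l hl => by
      rw [map_smul, norm_smul, norm_inv, norm_norm, inv_mul_cancel₀ (norm_pos l hl).ne']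
  refine ⟨fun i => s • z i, fun f => ?_, ?_⟩
  · calc ∑ i, |f (s • z i)| ^ q = s ^ q * ∑ i, |f (z i)| ^ q := by
          simp only [map_smul, smul_eq_mul, abs_mul, abs_of_pos hs,
            Real.mul_rpow hs.le (abs_nonneg _), mul_sum]
      _ ≤ s ^ q * ∑ l ∈ I, |f (‖T (x l)‖⁻¹ • x l)| ^ q := by gcongr; exact hz f
      _ = ∑ l ∈ I, (s / ‖T (x l)‖ * |f (x l)|) ^ q := by
          simp only [mul_sum, map_smul, smul_eq_mul, abs_mul, abs_inv, abs_norm]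
          refine sum_congr rfl fun l _ => ?_
          rw [← Real.mul_rpow hs.le (by positivity), ← mul_assoc, div_eq_mul_inv]
      _ ≤ ∑ l ∈ I, |f (x l)| ^ q := by
          gcongr with l hl
          exact mul_le_of_le_one_left (abs_nonneg _) (div_le_one_of_le₀ (hx l hl) (norm_nonneg _))
  · calc s ^ p * (((2 - r) / 8) ^ p * (#I ^ 2 / n)) ≤ s ^ p * ∑ i, ‖T (z i)‖ ^ p := by
          gcongr
          exact (rpow_mul_sq_div_le_mul_rpow h hq hrp (by linarith) (by linarith) (mod_cast hn)
            (mod_cast hI)).trans hTz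
      _ = ∑ i, ‖T (s • z i)‖ ^ p := by
          simp only [map_smul, norm_smul, Real.norm_of_nonneg hs.le,
            Real.mul_rpow hs.le (norm_nonneg _), mul_sum]

/-- The subfamily of `x` indexed by `I` has weak `ℓ_q`-norm at most `1`, stated with real sums
for a finite exponent `q`. -/
def WeakSumLeOne (q : ℝ) (x : ι → X) (I : Finset ι) : Prop :=
  ∀ f : StrongDual ℝ X, ‖f‖ ≤ 1 → ∑ l ∈ I, |f (x l)| ^ q ≤ 1

/-- For finite exponents, the bound `π_{p,q}^n(T) ^ p ≤ P`, stated with real sums. -/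
def SummingBound (p q : ℝ) (n : ℕ) (T : X →L[ℝ] Y) (P : ℝ) : Prop :=
  ∀ z : Fin n → X, WeakSumLeOne q z univ → ∑ i, ‖T (z i)‖ ^ p ≤ P

lemma WeakSumLeOne.mono {x : ι → X} {I J : Finset ι} (hx : WeakSumLeOne q x I) (hJI : J ⊆ I) :
    WeakSumLeOne q x J := fun f hf =>
  (sum_le_sum_of_subset_of_nonneg hJI fun _ _ _ => by positivity).trans (hx f hf)

lemma WeakSumLeOne.single {κ : Type*} [Fintype κ] [DecidableEq κ] (hq : q ≠ 0)
    {x : ι → X} {I : Finset ι} (hx : WeakSumLeOne q x I) {i : ι} (hi : i ∈ I) (k : κ) :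
    WeakSumLeOne q (Pi.single k (x i)) univ := by
  intro f hf
  rw [Fintype.sum_eq_single k fun l hl => by
    rw [Pi.single_eq_of_ne hl, map_zero, abs_zero, Real.zero_rpow hq], Pi.single_eq_same]
  exact (single_le_sum (f := fun l => |f (x l)| ^ q) (fun _ _ => by positivity) hi).trans (hx f hf)

lemma SummingBound.nonneg {P : ℝ} (hP : SummingBound p q n T P) (hp : p ≠ 0) (hq : q ≠ 0) :
    0 ≤ P := by
  simpa [Real.zero_rpow hp] using hP 0 fun f _ => by simp [Real.zero_rpow hq]

lemma SummingBound.sum_le {P : ℝ} (hP : SummingBound p q n T P) (hp : p ≠ 0) (hq : q ≠ 0)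
    {x : ι → X} {I : Finset ι} (hx : WeakSumLeOne q x I) (hI : #I ≤ n) :
    ∑ l ∈ I, ‖T (x l)‖ ^ p ≤ P := by
  obtain ⟨z, hz⟩ := exists_fin_padding hI x
  rw [← hz (fun v => ‖T v‖ ^ p) (by simp [Real.zero_rpow hp])]
  refine hP z fun f hf => ?_
  rw [hz (fun v => |f v| ^ q) (by simp [Real.zero_rpow hq])]
  exact hx f hf

lemma SummingBound.exists_rpow_mul_sq_card_le {P : ℝ} (hP : SummingBound p q n T P)
    (h : p.HolderTriple r q) (hq : 1 ≤ q) (hr : r < 2) (hn : 0 < n)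
    (hT : RankLE T n) {x : ι → X} {J : Finset ι} (hx : WeakSumLeOne q x J) (hJ : n ≤ #J) :
    ∃ l ∈ J, ‖T (x l)‖ ^ p * #J ^ 2 ≤ P * (8 / (2 - r)) ^ p * n := by
  have hp : p ≠ 0 := h.left_pos.ne'
  have hd : 0 < (2 - r) / 8 := by linarith
  have hn' : (0 : ℝ) < n := mod_cast hn
  obtain ⟨k, hk, hmin⟩ := exists_min_image J (fun l => ‖T (x l)‖) (card_pos.1 (hn.trans_le hJ))
  refine ⟨k, hk, ?_⟩
  rw [← inv_div, Real.inv_rpow hd.le, ← div_eq_mul_inv, ← div_le_iff₀ hn',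
    le_div_iff₀ (by positivity)]
  obtain hTk | hTk := (norm_nonneg (T (x k))).eq_or_lt
  · simpa [← hTk, Real.zero_rpow hp] using hP.nonneg hp (by linarith)
  obtain ⟨z, hz, hTz⟩ := exists_fin_dominated_of_le_norm h hq hr hn hT hJ hTk hmin
  calc ‖T (x k)‖ ^ p * #J ^ 2 / n * ((2 - r) / 8) ^ p
      = ‖T (x k)‖ ^ p * (((2 - r) / 8) ^ p * (#J ^ 2 / n)) := by ring
    _ ≤ ∑ i, ‖T (z i)‖ ^ p := hTz
    _ ≤ P := hP z fun f hf => (hz f).trans (hx f hf)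

lemma SummingBound.of_rankLE {P : ℝ} (hP : SummingBound p q n T P) (h : p.HolderTriple r q)
    (hq : 1 ≤ q) (hr : r < 2) (hn : 0 < n) (hT : RankLE T n) (N : ℕ) :
    SummingBound p q N T ((16 / (2 - r)) ^ p * P) := by
  intro z hz
  have hp : 0 < p := h.left_pos
  have hr0 : 0 < r := h.right_pos
  have hP0 : 0 ≤ P := hP.nonneg hp.ne' (by linarith)
  have h2r : 0 < 2 - r := by linarith
  have hn' : (n : ℝ) ≠ 0 := mod_cast hn.ne'
  have sum_le : ∑ i, ‖T (z i)‖ ^ p ≤ P + P * (8 / (2 - r)) ^ p * n / n :=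
    sum_le_add_div_of_exists_mul_sq_card_le hn (by positivity)
      (fun J hJ hJn => hP.sum_le hp.ne' (by linarith) (hz.mono hJ) hJn)
      fun J hJ hJn => hP.exists_rpow_mul_sq_card_le h hq hr hn hT (hz.mono hJ) hJn.le
  have one_add_le : 1 + (8 / (2 - r)) ^ p ≤ (16 / (2 - r)) ^ p := by
    calc 1 + (8 / (2 - r)) ^ p = 1 ^ p + (8 / (2 - r)) ^ p := by rw [Real.one_rpow]
      _ ≤ (1 + 8 / (2 - r)) ^ p := Real.add_rpow_le_rpow_add zero_le_one (by positivity)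
          (one_le_two.trans (two_le_of_holderTriple h hq hr.le))
      _ ≤ (16 / (2 - r)) ^ p := by
          have : 1 + 8 / (2 - r) ≤ 16 / (2 - r) := by
            rw [one_add_div h2r.ne']
            gcongr
            linarith
          gcongr
  calc ∑ i, ‖T (z i)‖ ^ p ≤ P + P * (8 / (2 - r)) ^ p * n / n := sum_le
    _ = (1 + (8 / (2 - r)) ^ p) * P := by field_simp
    _ ≤ (16 / (2 - r)) ^ p * P := by gcongr

end Operators

section SummingNorm

open Finset

variable {X Y : Type*} [NormedAddCommGroup X] [NormedSpace ℝ X] [NormedAddCommGroup Y]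
  [NormedSpace ℝ Y] {T : X →L[ℝ] Y} {n : ℕ} {p q : ℝ≥0∞}

lemma eSum_ofReal_le_ofReal_iff {ι : Type*} [Fintype ι] (hp0 : p ≠ 0) (hp : p ≠ ∞) {a : ι → ℝ}
    (ha : ∀ i, 0 ≤ a i) {M : ℝ} (hM : 0 ≤ M) :
    eSum p (fun i => ENNReal.ofReal (a i)) ≤ ENNReal.ofReal M ↔
      ∑ i, a i ^ p.toReal ≤ M ^ p.toReal := by
  have hp' : 0 < p.toReal := ENNReal.toReal_pos hp0 hp
  rw [eSum, if_neg hp, one_div, ENNReal.rpow_inv_le_iff hp',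
    ENNReal.ofReal_rpow_of_nonneg hM hp'.le]
  simp only [ENNReal.ofReal_rpow_of_nonneg (ha _) hp'.le]
  rw [← ENNReal.ofReal_sum_of_nonneg fun i _ => Real.rpow_nonneg (ha i) _,
    ENNReal.ofReal_le_ofReal_iff (by positivity)]

lemma weakLq_le_one_iff (hq0 : q ≠ 0) (hq : q ≠ ∞) {x : Fin n → X} :
    weakLq q x ≤ 1 ↔ WeakSumLeOne q.toReal x univ := by
  rw [weakLq, iSup_le_iff, Subtype.forall]
  refine forall₂_congr fun f _ => ?_
  rw [← ENNReal.ofReal_one, eSum_ofReal_le_ofReal_iff hq0 hq (fun _ => abs_nonneg _) zero_le_one,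
    Real.one_rpow]

lemma piN_le_ofReal_iff (hp0 : p ≠ 0) (hp : p ≠ ∞) (hq0 : q ≠ 0) (hq : q ≠ ∞) {M : ℝ}
    (hM : 0 ≤ M) :
    piN p q n T ≤ ENNReal.ofReal M ↔ SummingBound p.toReal q.toReal n T (M ^ p.toReal) := by
  have eSum_iff (z : Fin n → X) := eSum_ofReal_le_ofReal_iff hp0 hp
    (fun i => norm_nonneg (T (z i))) hM
  simp only [piN, iSup_le_iff, Subtype.forall, weakLq_le_one_iff hq0 hq, eSum_iff, SummingBound]

lemma piPQ_top_le_piN (hq0 : q ≠ 0) (hq : q ≠ ∞) (hn : 0 < n) : piPQ ∞ q T ≤ piN ∞ q n T := by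
  have := NeZero.of_pos hn
  refine iSup_le fun N => iSup_le fun ⟨z, hz⟩ => ?_
  simp only [eSum, if_true]
  refine iSup_le fun i => ?_
  have hsingle : weakLq q (Pi.single (0 : Fin n) (z i)) ≤ 1 :=
    (weakLq_le_one_iff hq0 hq).2 <| ((weakLq_le_one_iff hq0 hq).1 hz).single
      (ENNReal.toReal_pos hq0 hq).ne' (mem_univ i) 0
  calc ENNReal.ofReal ‖T (z i)‖
      = ENNReal.ofReal ‖T ((Pi.single 0 (z i) : Fin n → X) 0)‖ := by rw [Pi.single_eq_same]
    _ ≤ ⨆ k, ENNReal.ofReal ‖T ((Pi.single 0 (z i) : Fin n → X) k)‖ :=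
      le_iSup (fun k => ENNReal.ofReal ‖T ((Pi.single 0 (z i) : Fin n → X) k)‖) 0
    _ = eSum ∞ fun k => ENNReal.ofReal ‖T ((Pi.single 0 (z i) : Fin n → X) k)‖ := by
      rw [eSum, if_pos rfl]
    _ ≤ piN ∞ q n T := le_iSup_of_le ⟨Pi.single 0 (z i), hsingle⟩ le_rfl

lemma RankLE.eq_zero (hT : RankLE T 0) : T = 0 := by
  have := hT.1
  have range_eq_bot := Submodule.finrank_eq_zero.1 (Nat.le_zero.1 hT.2)
  exact ContinuousLinearMap.coe_injective (LinearMap.range_eq_bot.1 range_eq_bot)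

lemma piPQ_zero (hp : p ≠ 0) : piPQ p q (0 : X →L[ℝ] Y) = 0 := by
  obtain rfl | hp' := eq_or_ne p ∞
  · simp [piPQ, piN, eSum]
  · simp [piPQ, piN, eSum, hp', ENNReal.toReal_pos hp hp']

lemma piPQ_le_of_holderTriple {r : ℝ} (h : p.toReal.HolderTriple r q.toReal) (hq : 1 ≤ q.toReal)
    (hr : r < 2) (hn : 0 < n) (hT : RankLE T n) :
    piPQ p q T ≤ ENNReal.ofReal (16 / (2 - r)) * piN p q n T := by
  obtain ⟨hp0, hp⟩ := ENNReal.toReal_pos_iff.1 h.left_pos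
  obtain ⟨hq0, hq'⟩ := ENNReal.toReal_pos_iff.1 (one_pos.trans_le hq)
  have hc : 0 < 16 / (2 - r) := div_pos (by norm_num) (by linarith)
  obtain htop | htop := eq_or_ne (piN p q n T) ∞
  · rw [htop, ENNReal.mul_top (ENNReal.ofReal_pos.2 hc).ne']
    exact le_top
  have hbound := (piN_le_ofReal_iff hp0.ne' hp.ne hq0.ne' hq'.ne ENNReal.toReal_nonneg).1
    (ENNReal.ofReal_toReal htop).ge
  refine iSup_le fun N => ?_
  rw [← ENNReal.ofReal_toReal htop, ← ENNReal.ofReal_mul hc.le,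
    piN_le_ofReal_iff hp0.ne' hp.ne hq0.ne' hq'.ne (by positivity),
    Real.mul_rpow hc.le ENNReal.toReal_nonneg]
  exact hbound.of_rankLE h hq hr hn hT N

end SummingNorm

theorem statement0_general {X Y : Type*} [NormedAddCommGroup X] [NormedSpace ℝ X]
    [NormedAddCommGroup Y] [NormedSpace ℝ Y] {p q r : ℝ≥0∞} (hq : 1 ≤ q) (hr : r < 2)
    (hpqr : 1 / q = 1 / p + 1 / r) {n : ℕ} {T : X →L[ℝ] Y} (hT : RankLE T n) :
    piPQ p q T ≤ ENNReal.ofReal (16 / (2 - r.toReal)) * piN p q n T := by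
  have inv_add_inv_le : p⁻¹ + r⁻¹ ≤ 1 := by
    rw [← one_div, ← one_div, ← hpqr, one_div]
    exact ENNReal.inv_le_one.2 hq
  have hp0 : p ≠ 0 := by rintro rfl; simp at inv_add_inv_le
  have hr0 : r ≠ 0 := by rintro rfl; simp at inv_add_inv_le
  have hr' : r ≠ ∞ := hr.ne_top
  have hr2 : r.toReal < 2 := by
    simpa using ENNReal.toReal_strict_mono ENNReal.ofNat_ne_top hr
  have hq' : q ≠ ∞ := by rintro rfl; simp [eq_comm, hr'] at hpqr
  obtain rfl | hn := n.eq_zero_or_pos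
  · rw [hT.eq_zero, piPQ_zero hp0]
    exact zero_le
  obtain rfl | hp := eq_or_ne p ∞
  · have one_le_const : 1 ≤ ENNReal.ofReal (16 / (2 - r.toReal)) := by
      rw [ENNReal.one_le_ofReal, one_le_div (by linarith)]
      linarith [r.toReal_nonneg]
    exact (piPQ_top_le_piN (zero_lt_one.trans_le hq).ne' hq' hn).trans
      (le_mul_of_one_le_left' one_le_const)
  · exact piPQ_le_of_holderTriple (holderTriple_toReal hp0 hp hr0 hr' hpqr)
      (by simpa using ENNReal.toReal_mono hq' hq) hr2 hn hT

/-- for `1 ≤ q < p ≤ ∞` with `1/q = 1/p + 1/r` and `1 ≤ r < 2`,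
there is a constant `c_r` such that `π_{p,q}(T) ≤ c_r · π_{p,q}^n(T)` for every
operator `T` between real Banach spaces of rank at most `n`. -/
theorem statement0 (r : ℝ≥0∞) (hr1 : 1 ≤ r) (hr2 : r < 2) :
    ∃ c : ℝ≥0, 0 < c ∧
      ∀ (q p : ℝ≥0∞), 1 ≤ q → q < p → 1 / q = 1 / p + 1 / r →
        ∀ (X Y : Type*) [NormedAddCommGroup X] [NormedSpace ℝ X] [CompleteSpace X]
          [NormedAddCommGroup Y] [NormedSpace ℝ Y] [CompleteSpace Y]
          (n : ℕ) (T : X →L[ℝ] Y), RankLE T n →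
          piPQ p q T ≤ (c : ℝ≥0∞) * piN p q n T := by
  have hr : r.toReal < 2 := by simpa using ENNReal.toReal_strict_mono ENNReal.ofNat_ne_top hr2
  exact ⟨(16 / (2 - r.toReal)).toNNReal, Real.toNNReal_pos.2 (div_pos (by norm_num) (by linarith)),
    fun _ _ hq _ hpqr _ _ _ _ _ _ _ _ _ _ hT => statement0_general hq hr2 hpqr hT⟩

end
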